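/- Let (T, R, A) be weakly G-quasiapproximable. Then: (1) the extended good metrics M^G and R ∩ T^c on T^c are ℕ-equivalent; (2) R ∩ T̄^c and R^G ∩ T̄^c are ℕ-equivalent as metrics on T̄^c. If (T, R, A) is moreover weakly G-approximable, then (3) R and R^G are ℕ-equivalent orthogonal metrics on T, i.e. R lies in the preferred ℕ-equivalence class of orthogonal metrics. -/

import Mathlib

namespace GApprox

open CategoryTheory CategoryTheory.Limits CategoryTheory.Pretriangulated

universe w v u

variable (C : Type u) [Category.{v} C] [HasZeroObject C] [HasShift C ℤ]
  [Preadditive C] [∀ n : ℤ, (shiftFunctor C n).Additive] [Pretriangulated C]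
  [HasCoproducts.{v} C]

/-- The right orthogonal of a class of objects. -/
def rOrth (A : Set C) : Set C := {X | ∀ a ∈ A, ∀ f : a ⟶ X, f = 0}

/-- The left orthogonal of a class of objects. -/
def lOrth (A : Set C) : Set C := {X | ∀ a ∈ A, ∀ f : X ⟶ a, f = 0}

/-- `Hom(A, B) = 0`. -/
def homZero (A B : Set C) : Prop := ∀ a ∈ A, ∀ b ∈ B, ∀ f : a ⟶ b, f = 0

/-- The star operation `A ⋆ B`: objects `Y` admitting a distinguished triangle
`X ⟶ Y ⟶ Z ⟶ ΣX` with `X ∈ A` and `Z ∈ B`. -/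
def starSet (A B : Set C) : Set C :=
  {Y | ∃ (X Z : C) (f : X ⟶ Y) (g : Y ⟶ Z) (h : Z ⟶ X⟦(1 : ℤ)⟧),
    Triangle.mk f g h ∈ (distTriang C) ∧ X ∈ A ∧ Z ∈ B}

/-- The (strictly full) shift `Σⁿ A` of a class of objects. -/
def shiftSet (n : ℤ) (A : Set C) : Set C :=
  {X | ∃ a ∈ A, Nonempty (X ≅ (shiftFunctor C n).obj a)}

/-- An object is compact if any map to a coproduct factors through a finite subcoproduct. -/
def IsCompactObj (X : C) : Prop :=
  ∀ (α : Type v) (f : α → C) (g : X ⟶ ∐ f),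
    ∃ (s : Finset α) (h : X ⟶ ∐ (fun i : {a : α // a ∈ s} => f i.1)),
      g = h ≫ Sigma.desc (fun i => Sigma.ι f i.1)

/-- The class of compact objects `T^c`. -/
def compacts : Set C := {X | IsCompactObj C X}

/-- The category is compactly generated. -/
def CompactlyGenerated : Prop :=
  ∀ X : C, (∀ K ∈ compacts C, ∀ f : K ⟶ X, f = 0) → IsZero X

/-- Closure under direct summands (retracts), `smd`. -/
def smd (A : Set C) : Set C :=
  {X | ∃ Y ∈ A, ∃ (i : X ⟶ Y) (r : Y ⟶ X), i ≫ r = 𝟙 X}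

/-- Closure of a class of objects under finite direct sums and extensions (`coprod`). -/
inductive extClosure (U : Set C) : C → Prop
  | of {X : C} : X ∈ U → extClosure U X
  | zero {X : C} : IsZero X → extClosure U X
  | ext {X Y Z : C} (f : X ⟶ Y) (g : Y ⟶ Z) (h : Z ⟶ X⟦(1 : ℤ)⟧) :
      Triangle.mk f g h ∈ (distTriang C) → extClosure U X → extClosure U Z → extClosure U Y

/-- Closure of a class of objects under arbitrary coproducts, extensions and
direct summands. -/
inductive bigClosure (U : Set C) : C → Prop
  | of {X : C} : X ∈ U → bigClosure U X
  | zero {X : C} : IsZero X → bigClosure U X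
  | coprod {α : Type v} (f : α → C) :
      (∀ i, bigClosure U (f i)) → ∀ {X : C}, (X ≅ ∐ f) → bigClosure U X
  | ext {X Y Z : C} (f : X ⟶ Y) (g : Y ⟶ Z) (h : Z ⟶ X⟦(1 : ℤ)⟧) :
      Triangle.mk f g h ∈ (distTriang C) → bigClosure U X → bigClosure U Z → bigClosure U Y
  | retract {X Y : C} (i : X ⟶ Y) (r : Y ⟶ X) :
      i ≫ r = 𝟙 X → bigClosure U Y → bigClosure U X

/-- Closure of a class of objects under finite direct sums, `add`. -/
def addClosure (U : Set C) : Set C :=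
  {X | ∃ (n : ℕ) (f : ULift.{v} (Fin n) → C), (∀ i, f i ∈ U) ∧ Nonempty (X ≅ ∐ f)}

/-- Closure of a class of objects under arbitrary coproducts, `Add`. -/
def bigAddClosure (U : Set C) : Set C :=
  {X | ∃ (α : Type v) (f : α → C), (∀ i, f i ∈ U) ∧ Nonempty (X ≅ ∐ f)}

/-- `coprod_n(U)`. -/
def coprodPow (U : Set C) : ℕ → Set C
  | 0 => {X | IsZero X}
  | n + 1 => starSet C (addClosure C U) (coprodPow U n)

/-- `Coprod_n(U)`. -/
def coprodPowBig (U : Set C) : ℕ → Set C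
  | 0 => {X | IsZero X}
  | n + 1 => starSet C (bigAddClosure C U) (coprodPowBig U n)

/-- `G[a,b] = ∪ { G^m : a ≤ m ≤ b }`. -/
def unionIcc (G : ℤ → Set C) (a b : ℤ) : Set C := ⋃ m ∈ Set.Icc a b, G m

/-- `G(-∞,b] = ∪ { G^m : m ≤ b }`. -/
def unionIic (G : ℤ → Set C) (b : ℤ) : Set C := ⋃ m ∈ Set.Iic b, G m

/-- `G(-∞,∞) = ∪ { G^m : m ∈ ℤ }`. -/
def unionAll (G : ℤ → Set C) : Set C := ⋃ m : ℤ, G m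

/-- `G^{[a,b]} = smd(coprod(G[a,b]))`. -/
def gInt (G : ℤ → Set C) (a b : ℤ) : Set C :=
  smd C {X | extClosure C (unionIcc C G a b) X}

/-- `G^{(-∞,b]} = smd(coprod(G(-∞,b]))`. -/
def gIic (G : ℤ → Set C) (b : ℤ) : Set C :=
  smd C {X | extClosure C (unionIic C G b) X}

/-- `G^{[a,b]}_k = smd(coprod_k(G[a,b]))`. -/
def gIntPow (G : ℤ → Set C) (a b k : ℤ) : Set C :=
  smd C (coprodPow C (unionIcc C G a b) k.toNat)

/-- `Ḡ^{[a,b]}`. -/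
def gBarInt (G : ℤ → Set C) (a b : ℤ) : Set C :=
  {X | bigClosure C (unionIcc C G a b) X}

/-- `Ḡ^{(-∞,b]}`. -/
def gBarIic (G : ℤ → Set C) (b : ℤ) : Set C :=
  {X | bigClosure C (unionIic C G b) X}

/-- `Ḡ^{[a,b]}_k = smd(Coprod_k(G[a,b]))`. -/
def gBarIntPow (G : ℤ → Set C) (a b k : ℤ) : Set C :=
  smd C (coprodPowBig C (unionIcc C G a b) k.toNat)

/-- `M^G_n := G^{(-∞,-n]}`. -/
def MG (G : ℤ → Set C) (n : ℤ) : Set C := gIic C G (-n)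

/-- `R^G_n := ⊥((M^G_n)^⊥)`, orthogonals taken in the whole category. -/
def RG (G : ℤ → Set C) (n : ℤ) : Set C := lOrth C (rOrth C (MG C G n))

/-- A pre-generating sequence. -/
structure IsPreGenSeq (G : ℤ → Set C) : Prop where
  compact : ∀ i : ℤ, G i ⊆ compacts C
  generates : smd C {X | extClosure C (unionAll C G) X} = compacts C

/-- A generating sequence. -/
structure IsGenSeq (G : ℤ → Set C) extends IsPreGenSeq C G : Prop where
  shift_cond : ∀ n : ℤ,
    shiftSet C (-1) (G n) ∪ G n ∪ shiftSet C 1 (G n) ⊆ gInt C G (n - 1) (n + 1)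

/-- A finite generating sequence. -/
structure IsFinGenSeq (G : ℤ → Set C) extends IsGenSeq C G : Prop where
  finite : ∀ i : ℤ, (G i).Finite

/-- ℕ-equivalence of generating sequences. -/
def GenSeqNEquiv (G G' : ℤ → Set C) : Prop :=
  ∃ N : ℤ, 0 ≤ N ∧ (∀ n : ℤ, G' n ⊆ gInt C G (n - N) (n + N)) ∧
    ∀ n : ℤ, G n ⊆ gInt C G' (n - N) (n + N)

/-- ℕ-equivalence of (extended good) metrics. -/
def MetricNEquiv (M N : ℤ → Set C) : Prop :=
  ∃ n : ℤ, 0 ≤ n ∧ (∀ i : ℤ, M (i + n) ⊆ N i) ∧ ∀ i : ℤ, N (i + n) ⊆ M i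

/-- An extended good metric. -/
structure IsExtGoodMetric (M : ℤ → Set C) : Prop where
  zero_mem : ∀ (n : ℤ) (X : C), IsZero X → X ∈ M n
  iso_closed : ∀ (n : ℤ) ⦃X Y : C⦄, (X ≅ Y) → X ∈ M n → Y ∈ M n
  star_subset : ∀ n : ℤ, starSet C (M n) (M n) ⊆ M n
  shift_one : ∀ n : ℤ, shiftSet C 1 (M (n + 1)) ⊆ M n
  antitone : ∀ n : ℤ, M (n + 1) ⊆ M n
  shift_neg_one : ∀ n : ℤ, shiftSet C (-1) (M (n + 1)) ⊆ M n

/-- An orthogonal metric. -/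
structure IsOrthMetric (M : ℤ → Set C) extends IsExtGoodMetric C M : Prop where
  orth : ∀ n : ℤ, lOrth C (rOrth C (M n)) = M n

/-- The closure of the compacts `T̄^c := ∩ₙ T^c ⋆ Rₙ`. -/
def closCompacts (Rm : ℤ → Set C) : Set C := ⋂ n : ℤ, starSet C (compacts C) (Rm n)

/-- `(T, R, A)` is `G`-preapproximable. -/
structure IsGPreApprox (G Rm : ℤ → Set C) (A : ℤ) : Prop where
  orthMetric : IsOrthMetric C Rm
  A_pos : 0 < A
  cond0 : ∀ i : ℤ, MG C G i ⊆ ⋃ n ∈ {n : ℤ | |n| ≤ A}, shiftSet C n (MG C G (i + 1))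
  cond1 : ∀ i : ℤ, MG C G (i + A) ⊆ Rm i ∩ compacts C
  cond2 : ∀ n : ℤ, ∃ N : ℤ, ∀ i : ℤ, N ≤ i → homZero C (G n) (Rm i)

/-- There is a distinguished triangle `E ⟶ F ⟶ D ⟶ ΣE` with `E ∈ S` and `D ∈ D`. -/
def approxTriangle (F : C) (S D : Set C) : Prop :=
  ∃ (E Dd : C) (f : E ⟶ F) (g : F ⟶ Dd) (h : Dd ⟶ E⟦(1 : ℤ)⟧),
    Triangle.mk f g h ∈ (distTriang C) ∧ E ∈ S ∧ Dd ∈ D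

/-- `(T, R, A)` is weakly `G`-approximable. -/
structure IsWeakGApprox (G Rm : ℤ → Set C) (A : ℤ) extends IsGPreApprox C G Rm A : Prop where
  hom_vanish : ∀ n i : ℤ, A ≤ n + i → homZero C (G n) (Rm i)
  approx : ∀ i : ℤ, ∀ F ∈ Rm i,
    approxTriangle C F (gBarInt C G (-A - i) (A - i)) (Rm (i + 1))

/-- `(T, R, A)` is `G`-approximable. -/
structure IsGApprox (G Rm : ℤ → Set C) (A : ℤ) extends IsWeakGApprox C G Rm A : Prop where
  approx' : ∀ i : ℤ, ∀ F ∈ Rm i,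
    approxTriangle C F (gBarIntPow C G (-A - i) (A - i) A) (Rm (i + 1))

/-- `(T, R, A)` is weakly `G`-quasiapproximable. -/
structure IsWeakGQuasiApprox (G Rm : ℤ → Set C) (A : ℤ) extends IsGPreApprox C G Rm A : Prop where
  hom_vanish : ∀ n i : ℤ, A ≤ n + i → homZero C (G n) (Rm i)
  approx : ∀ i : ℤ, ∀ F ∈ Rm i ∩ closCompacts C Rm,
    approxTriangle C F (gBarInt C G (-A - i) (A - i)) (Rm (i + 1) ∩ closCompacts C Rm)

/-- `(T, R, A)` is `G`-quasiapproximable. -/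
structure IsGQuasiApprox (G Rm : ℤ → Set C) (A : ℤ) extends IsWeakGQuasiApprox C G Rm A : Prop where
  approx' : ∀ i : ℤ, ∀ F ∈ Rm i ∩ closCompacts C Rm,
    approxTriangle C F (gBarIntPow C G (-A - i) (A - i) A) (Rm (i + 1) ∩ closCompacts C Rm)

/-- The coproduct of a sequence of objects. -/
noncomputable def seqCoprod (E : ℕ → C) : C := ∐ (fun n : ULift.{v} ℕ => E n.down)

/-- The canonical inclusion into the coproduct of a sequence. -/
noncomputable def seqInj (E : ℕ → C) (n : ℕ) : E n ⟶ seqCoprod C E :=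
  Sigma.ι (fun n : ULift.{v} ℕ => E n.down) (ULift.up n)

/-- The map `1 - shift` on the coproduct of a sequence. -/
noncomputable def oneMinusShift (E : ℕ → C) (e : ∀ n, E n ⟶ E (n + 1)) :
    seqCoprod C E ⟶ seqCoprod C E :=
  Sigma.desc (fun n => seqInj C E n.down - e n.down ≫ seqInj C E (n.down + 1))

/-- `H`, equipped with `π`, `δ`, is a homotopy colimit of the sequence `E`. -/
def IsHocolim (E : ℕ → C) (e : ∀ n, E n ⟶ E (n + 1)) (H : C)
    (π : seqCoprod C E ⟶ H) (δ : H ⟶ (seqCoprod C E)⟦(1 : ℤ)⟧) : Prop :=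
  Triangle.mk (oneMinusShift C E e) π δ ∈ (distTriang C)

/-- A single compact generator. -/
def IsCompactGenerator (G₀ : C) : Prop :=
  IsCompactObj C G₀ ∧ ∀ X : C, (∀ n : ℤ, ∀ f : (shiftFunctor C n).obj G₀ ⟶ X, f = 0) → IsZero X

/-- The strictly full subcategory `{Σʲ G₀}`. -/
def singletonShift (G₀ : C) (j : ℤ) : Set C :=
  {X | Nonempty (X ≅ (shiftFunctor C j).obj G₀)}

/-- The generating sequence `Gⁿ := {Σ⁻ⁿ G₀}`. -/
def genSeqNeg (G₀ : C) (n : ℤ) : Set C := singletonShift C G₀ (-n)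

/-- The generating sequence `Gⁿ := {Σⁿ G₀}`. -/
def genSeqPos (G₀ : C) (n : ℤ) : Set C := singletonShift C G₀ n

section Aux

set_option linter.unusedSectionVars false

variable {C}

lemma exY2 {X Y Z W : C} {f : X ⟶ Y} {g : Y ⟶ Z} {h : Z ⟶ X⟦(1 : ℤ)⟧}
    (hT : Triangle.mk f g h ∈ distTriang C) (q : Y ⟶ W) (hq : f ≫ q = 0) :
    ∃ r : Z ⟶ W, q = g ≫ r := Triangle.yoneda_exact₂ _ hT q hq

lemma exC2 {X Y Z W : C} {f : X ⟶ Y} {g : Y ⟶ Z} {h : Z ⟶ X⟦(1 : ℤ)⟧}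
    (hT : Triangle.mk f g h ∈ distTriang C) (q : W ⟶ Y) (hq : q ≫ g = 0) :
    ∃ r : W ⟶ X, q = r ≫ f := Triangle.coyoneda_exact₂ _ hT q hq

lemma exC3 {X Y Z W : C} {f : X ⟶ Y} {g : Y ⟶ Z} {h : Z ⟶ X⟦(1 : ℤ)⟧}
    (hT : Triangle.mk f g h ∈ distTriang C) (q : W ⟶ Z) (hq : q ≫ h = 0) :
    ∃ r : W ⟶ Y, q = r ≫ g := Triangle.coyoneda_exact₃ _ hT q hq

lemma exInv {X Y Z : C} {f : X ⟶ Y} {g : Y ⟶ Z} {h : Z ⟶ X⟦(1 : ℤ)⟧}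
    (hT : Triangle.mk f g h ∈ distTriang C) : ∃ u : Z⟦(-1 : ℤ)⟧ ⟶ X,
      ∀ (W : C) (q : X ⟶ W), u ≫ q = 0 → ∃ r : Y ⟶ W, q = f ≫ r :=
  ⟨(Triangle.mk f g h).invRotate.mor₁, fun _ q hq =>
    Triangle.yoneda_exact₂ _ (inv_rot_of_distTriang _ hT) q hq⟩

lemma compl2 {X Y Z X' Y' Z' : C} {f : X ⟶ Y} {g : Y ⟶ Z} {h : Z ⟶ X⟦(1 : ℤ)⟧}
    {f' : X' ⟶ Y'} {g' : Y' ⟶ Z'} {h' : Z' ⟶ X'⟦(1 : ℤ)⟧}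
    (hT : Triangle.mk f g h ∈ distTriang C) (hT' : Triangle.mk f' g' h' ∈ distTriang C)
    (a : X ⟶ X') (c : Z ⟶ Z') (hac : h ≫ a⟦(1 : ℤ)⟧' = c ≫ h') :
    ∃ b : Y ⟶ Y', f ≫ b = a ≫ f' ∧ g ≫ c = b ≫ g' :=
  complete_distinguished_triangle_morphism₂ _ _ hT hT' a c hac

open Classical in
/-- The endomorphism of a coproduct killing the components in `s`. -/
noncomputable def killEnd {α : Type v} (f : α → C) (s : Finset α) : ∐ f ⟶ ∐ f :=
  Sigma.desc (fun i => if i ∈ s then 0 else Sigma.ι f i)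

open Classical in
/-- The projection of a coproduct to a component. -/
noncomputable def projTo {α : Type v} (f : α → C) (i : α) : ∐ f ⟶ f i :=
  Sigma.desc (fun j => if h : j = i then eqToHom (by rw [h]) else 0)

lemma ι_killEnd_mem {α : Type v} (f : α → C) (s : Finset α) (i : α) (hi : i ∈ s) :
    Sigma.ι f i ≫ killEnd f s = 0 := by
  simp [killEnd, hi]

lemma ι_killEnd_notMem {α : Type v} (f : α → C) (s : Finset α) (i : α) (hi : i ∉ s) :
    Sigma.ι f i ≫ killEnd f s = Sigma.ι f i := by
  simp [killEnd, hi]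

lemma isCompactObj_iff (X : C) : IsCompactObj C X ↔
    ∀ (α : Type v) (f : α → C) (g : X ⟶ ∐ f), ∃ s : Finset α, g ≫ killEnd f s = 0 := by
  classical
  constructor
  · intro hX α f g
    obtain ⟨s, h, rfl⟩ := hX α f g
    refine ⟨s, ?_⟩
    have : Sigma.desc (fun i : {a : α // a ∈ s} => Sigma.ι f i.1) ≫ killEnd f s = 0 := by
      apply Sigma.hom_ext
      intro i
      simp [ι_killEnd_mem f s i.1 i.2]
    rw [Category.assoc, this, comp_zero]
  · intro hX α f g
    obtain ⟨s, hs⟩ := hX α f g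
    refine ⟨s, g ≫ Sigma.desc (fun i => if hi : i ∈ s then
      Sigma.ι (fun i : {a : α // a ∈ s} => f i.1) ⟨i, hi⟩ else 0), ?_⟩
    have : 𝟙 (∐ f) = killEnd f s + Sigma.desc (fun i => if hi : i ∈ s then
      Sigma.ι (fun i : {a : α // a ∈ s} => f i.1) ⟨i, hi⟩ else 0) ≫
        Sigma.desc (fun i : {a : α // a ∈ s} => Sigma.ι f i.1) := by
      apply Sigma.hom_ext
      intro i
      by_cases hi : i ∈ s
      · simp [ι_killEnd_mem f s i hi, hi]
      · simp [ι_killEnd_notMem f s i hi, hi]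
    calc g = g ≫ 𝟙 _ := by simp
      _ = _ := by rw [this]; simp [hs]

lemma compact_sum {X : C} (hX : IsCompactObj C X) {α : Type v} (f : α → C) (g : X ⟶ ∐ f) :
    ∃ s : Finset α, g = ∑ i ∈ s, (g ≫ projTo f i) ≫ Sigma.ι f i := by
  classical
  obtain ⟨s, hs⟩ := (isCompactObj_iff X).1 hX α f g
  refine ⟨s, ?_⟩
  have : 𝟙 (∐ f) = killEnd f s + ∑ i ∈ s, projTo f i ≫ Sigma.ι f i := by
    apply Sigma.hom_ext
    intro j
    have h1 : ∀ i, Sigma.ι f j ≫ projTo f i ≫ Sigma.ι f i = if i = j then Sigma.ι f j else 0 := by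
      intro i
      by_cases h : i = j
      · subst h
        simp [projTo]
      · simp [projTo, h, Ne.symm h]
    rw [Preadditive.comp_add, Preadditive.comp_sum]
    simp only [h1]
    by_cases hi : j ∈ s
    · simp [ι_killEnd_mem f s j hi, hi]
    · simp [ι_killEnd_notMem f s j hi, hi]
  calc g = g ≫ 𝟙 _ := by simp
    _ = _ := by rw [this]; simp [hs, Preadditive.comp_sum]

lemma killEnd_union {α : Type v} [DecidableEq α] (f : α → C) (s t : Finset α) :
    killEnd f s ≫ killEnd f t = killEnd f (s ∪ t) := by
  apply Sigma.hom_ext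
  intro i
  by_cases hi : i ∈ s
  · rw [← Category.assoc, ι_killEnd_mem f s i hi, zero_comp, ι_killEnd_mem]
    simp [hi]
  · rw [← Category.assoc, ι_killEnd_notMem f s i hi]
    by_cases ht : i ∈ t
    · rw [ι_killEnd_mem f t i ht, ι_killEnd_mem]
      simp [ht]
    · rw [ι_killEnd_notMem f t i ht, ι_killEnd_notMem]
      simp [hi, ht]

lemma compact_shift {X : C} (hX : IsCompactObj C X) : IsCompactObj C (X⟦(-1 : ℤ)⟧) := by
  rw [isCompactObj_iff] at hX ⊢
  intro α f g
  let e : X⟦(-1 : ℤ)⟧⟦(1 : ℤ)⟧ ≅ X := shiftNegShift X (1 : ℤ)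
  let φ := sigmaComparison (shiftFunctor C (1 : ℤ)) f
  obtain ⟨s, hs⟩ := hX α (fun i => (f i)⟦(1 : ℤ)⟧) (e.inv ≫ g⟦(1 : ℤ)⟧' ≫ inv φ)
  refine ⟨s, ?_⟩
  have hk : killEnd (fun i => (f i)⟦(1 : ℤ)⟧) s ≫ φ = φ ≫ (killEnd f s)⟦(1 : ℤ)⟧' := by
    apply Sigma.hom_ext
    intro i
    by_cases hi : i ∈ s
    · rw [← Category.assoc, ι_killEnd_mem _ s i hi, ← Category.assoc, ι_comp_sigmaComparison,
        ← Functor.map_comp, ι_killEnd_mem _ s i hi]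
      simp
    · rw [← Category.assoc, ι_killEnd_notMem _ s i hi, ← Category.assoc, ι_comp_sigmaComparison,
        ← Functor.map_comp, ι_killEnd_notMem _ s i hi]
  apply (shiftFunctor C (1 : ℤ)).map_injective
  rw [Functor.map_comp, Functor.map_zero]
  have h2 : (e.inv ≫ g⟦(1 : ℤ)⟧' ≫ inv φ) ≫ killEnd (fun i => (f i)⟦(1 : ℤ)⟧) s ≫ φ = 0 := by
    rw [← Category.assoc, hs, zero_comp]
  rw [hk] at h2
  simp only [Category.assoc, IsIso.inv_hom_id_assoc] at h2
  rw [← cancel_epi e.inv, h2, comp_zero]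

lemma compact_fiber {X Y Z : C} (f : X ⟶ Y) (g : Y ⟶ Z) (h : Z ⟶ X⟦(1 : ℤ)⟧)
    (hT : Triangle.mk f g h ∈ distTriang C) (hY : IsCompactObj C Y) (hZ : IsCompactObj C Z) :
    IsCompactObj C X := by
  classical
  obtain ⟨u, hu⟩ := exInv hT
  have hZ' := compact_shift hZ
  rw [isCompactObj_iff] at hY hZ' ⊢
  intro α d q
  obtain ⟨s, hs⟩ := hZ' α d (u ≫ q)
  obtain ⟨r, hr⟩ := hu _ (q ≫ killEnd d s) (by rw [← Category.assoc]; exact hs)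
  obtain ⟨t, ht⟩ := hY α d r
  refine ⟨s ∪ t, ?_⟩
  rw [← killEnd_union, ← Category.assoc, hr, Category.assoc, ht, comp_zero]

/-- The map `v` factors through an object of the extension closure of `U`. -/
def Fac (U : Set C) {B F : C} (v : B ⟶ F) : Prop :=
  ∃ E : C, extClosure C U E ∧ ∃ (a : B ⟶ E) (b : E ⟶ F), v = a ≫ b

lemma Fac.zero (U : Set C) (B F : C) : Fac U (0 : B ⟶ F) :=
  ⟨_, .zero (isZero_zero C), 0, 0, by simp⟩

lemma Fac.comp {U : Set C} {B F F' : C} {v : B ⟶ F} (hv : Fac U v) (w : F ⟶ F') :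
    Fac U (v ≫ w) := by
  obtain ⟨E, hE, a, b, rfl⟩ := hv
  exact ⟨E, hE, a, b ≫ w, by simp⟩

lemma Fac.add {U : Set C} {B F : C} {v w : B ⟶ F} (hv : Fac U v) (hw : Fac U w) :
    Fac U (v + w) := by
  obtain ⟨E, hE, a, b, rfl⟩ := hv
  obtain ⟨E', hE', a', b', rfl⟩ := hw
  exact ⟨E ⊞ E', .ext _ _ _ (binaryBiproductTriangle_distinguished E E') hE hE',
    biprod.lift a a', biprod.desc b b', by simp⟩

lemma Fac.sum {U : Set C} {B F : C} {α : Type v} (s : Finset α) (w : α → (B ⟶ F))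
    (hw : ∀ i, Fac U (w i)) : Fac U (∑ i ∈ s, w i) := by
  classical
  induction s using Finset.induction_on with
  | empty => simpa using Fac.zero U B F
  | insert i s hi ih => rw [Finset.sum_insert hi]; exact (hw i).add ih

lemma Fac.of_triangle {U : Set C} {A B K F : C} (m : A ⟶ B) (n : B ⟶ K) (k : K ⟶ A⟦(1 : ℤ)⟧)
    (hT : Triangle.mk m n k ∈ distTriang C) (hK : extClosure C U K) (v : B ⟶ F)
    (hv : Fac U (m ≫ v)) : Fac U v := by
  obtain ⟨X, hX, a, b, hab⟩ := hv
  obtain ⟨Q, i, p, hQ⟩ := distinguished_cocone_triangle₂ (k ≫ a⟦(1 : ℤ)⟧')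
  obtain ⟨c, hc, -⟩ := compl2 hT hQ a (𝟙 K) (Category.id_comp _).symm
  have hkm : k ≫ m⟦(1 : ℤ)⟧' = 0 := comp_distTriang_mor_zero₃₁ _ hT
  obtain ⟨d, hd, -⟩ := compl2 hQ
    (contractible_distinguished F) b 0 (by
      rw [Category.assoc, ← Functor.map_comp, ← hab, Functor.map_comp, reassoc_of% hkm]
      simp)
  rw [Category.comp_id] at hd
  obtain ⟨r, hr⟩ := exY2 hT (v - c ≫ d) (by
    rw [Preadditive.comp_sub, reassoc_of% hc, hd, hab, sub_self])
  have : v = c ≫ d + n ≫ r := by rw [← hr]; abel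
  rw [this]
  exact Fac.add ⟨Q, .ext _ _ _ hQ hX hK, c, d, rfl⟩ ⟨K, hK, n, r, rfl⟩

lemma extClosure_mono {U V : Set C} (h : U ⊆ V) {X : C} (hX : extClosure C U X) :
    extClosure C V X := by
  induction hX with
  | of hx => exact .of (h hx)
  | zero hx => exact .zero hx
  | ext f g h hT _ _ h1 h2 => exact .ext f g h hT h1 h2

lemma bigClosure_mono {U V : Set C} (h : U ⊆ V) {X : C} (hX : bigClosure C U X) :
    bigClosure C V X := by
  induction hX with
  | of hx => exact .of (h hx)
  | zero hx => exact .zero hx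
  | coprod f _ e ih => exact .coprod f ih e
  | ext f g h hT _ _ h1 h2 => exact .ext f g h hT h1 h2
  | retract i r hir _ ih => exact .retract i r hir ih

/-- Maps from compacts to the big closure factor through the small one. -/
lemma fac_of_bigClosure {U : Set C} (hU : ∀ E, extClosure C U E → IsCompactObj C E) {X : C}
    (hX : bigClosure C U X) : ∀ (B : C), IsCompactObj C B → ∀ v : B ⟶ X, Fac U v := by
  induction hX with
  | of hx => intro B _ v; exact ⟨_, .of hx, v, 𝟙 _, by simp⟩
  | zero hx => intro B _ v; exact ⟨_, .zero hx, v, 𝟙 _, by simp⟩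
  | coprod f _ e ih =>
    intro B hB v
    obtain ⟨s, hs⟩ := compact_sum hB f (v ≫ e.hom)
    have h1 : Fac U (v ≫ e.hom) := by
      rw [hs]
      exact Fac.sum s _ (fun i => (ih i B hB _).comp _)
    simpa using h1.comp e.inv
  | ext f g h hT _ _ h1 h2 =>
    intro B hB v
    obtain ⟨E, hE, a, b, hab⟩ := h2 B hB (v ≫ g)
    obtain ⟨B₁, m, k, hB₁⟩ := distinguished_cocone_triangle₁ a
    have hc := compact_fiber _ _ _ hB₁ hB (hU E hE)
    have hma : m ≫ a = 0 := comp_distTriang_mor_zero₁₂ _ hB₁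
    obtain ⟨w, hw⟩ := exC2 hT (m ≫ v) (by
      rw [Category.assoc, hab, reassoc_of% hma, zero_comp])
    refine Fac.of_triangle m a k hB₁ hE v ?_
    rw [hw]
    exact (h1 B₁ hc w).comp f
  | retract i r hir _ ih =>
    intro B hB v
    have := (ih B hB (v ≫ i)).comp r
    simpa [hir] using this

/-- Maps from compacts to a tower which die at a finite stage. -/
lemma fac_of_tower {U : Set C} (hU : ∀ E, extClosure C U E → IsCompactObj C E)
    (D E : ℕ → C) (e : ∀ k, E k ⟶ D k) (d : ∀ k, D k ⟶ D (k + 1))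
    (δ : ∀ k, D (k + 1) ⟶ (E k)⟦(1 : ℤ)⟧)
    (hT : ∀ k, Triangle.mk (e k) (d k) (δ k) ∈ distTriang C)
    (hE : ∀ k, bigClosure C U (E k)) (c : ∀ k, D 0 ⟶ D k) (hc0 : c 0 = 𝟙 _)
    (hc : ∀ k, c (k + 1) = c k ≫ d k) (k : ℕ) :
    ∀ (B : C), IsCompactObj C B → ∀ v : B ⟶ D 0, v ≫ c k = 0 → Fac U v := by
  induction k with
  | zero =>
    intro B _ v hv
    rw [hc0, Category.comp_id] at hv
    rw [hv]
    exact Fac.zero _ _ _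
  | succ k ih =>
    intro B hB v hv
    obtain ⟨w, hw⟩ := exC2 (hT k) (v ≫ c k) (by
      rw [Category.assoc, ← hc, hv])
    obtain ⟨K, hK, a, b, hab⟩ := fac_of_bigClosure hU (hE k) B hB w
    obtain ⟨B₁, m, t, hB₁⟩ := distinguished_cocone_triangle₁ a
    have hcc := compact_fiber _ _ _ hB₁ hB (hU K hK)
    have hma : m ≫ a = 0 := comp_distTriang_mor_zero₁₂ _ hB₁
    refine Fac.of_triangle m a t hB₁ hK v (ih B₁ hcc _ ?_)
    rw [Category.assoc, hw, hab, Category.assoc, reassoc_of% hma, zero_comp]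

lemma vanish_of_extClosure {Rm : ℤ → Set C} {U : Set C}
    (hU : ∀ X ∈ U, ∃ N : ℤ, ∀ i, N ≤ i → ∀ Y ∈ Rm i, ∀ f : X ⟶ Y, f = 0) {X : C}
    (hX : extClosure C U X) : ∃ N : ℤ, ∀ i, N ≤ i → ∀ Y ∈ Rm i, ∀ f : X ⟶ Y, f = 0 := by
  induction hX with
  | of hx => exact hU _ hx
  | zero hx => exact ⟨0, fun _ _ _ _ f => hx.eq_of_src f 0⟩
  | ext f g h hT _ _ h1 h2 =>
    obtain ⟨N₁, h1⟩ := h1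
    obtain ⟨N₂, h2⟩ := h2
    refine ⟨max N₁ N₂, fun i hi Y hY q => ?_⟩
    obtain ⟨r, hr⟩ := exY2 hT q
      (h1 i (le_trans (le_max_left _ _) hi) Y hY _)
    rw [hr, h2 i (le_trans (le_max_right _ _) hi) Y hY r, comp_zero]

lemma vanish_of_compact {G Rm : ℤ → Set C} {A : ℤ} (hG : IsGenSeq C G)
    (h : IsGPreApprox C G Rm A) {X : C} (hX : IsCompactObj C X) :
    ∃ N : ℤ, ∀ i, N ≤ i → ∀ Y ∈ Rm i, ∀ f : X ⟶ Y, f = 0 := by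
  have hX' : X ∈ smd C {X | extClosure C (unionAll C G) X} := by
    rw [hG.generates]; exact hX
  obtain ⟨Y, hY, i, r, hir⟩ := hX'
  obtain ⟨N, hN⟩ := vanish_of_extClosure (Rm := Rm) (U := unionAll C G) (by
    intro Z hZ
    obtain ⟨n, hn⟩ := Set.mem_iUnion.1 hZ
    obtain ⟨N, hN⟩ := h.cond2 n
    exact ⟨N, fun i hi Y hY f => hN i hi Z hn Y hY f⟩) hY
  refine ⟨N, fun j hj W hW f => ?_⟩
  calc f = i ≫ r ≫ f := by rw [← Category.assoc, hir, Category.id_comp]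
    _ = 0 := by rw [hN j hj W hW (r ≫ f), comp_zero]

lemma bigClosure_zero {U : Set C} {Y : C} (hU : ∀ X ∈ U, ∀ f : X ⟶ Y, f = 0) {X : C}
    (hX : bigClosure C U X) : ∀ f : X ⟶ Y, f = 0 := by
  induction hX with
  | of hx => exact hU _ hx
  | zero hx => exact fun f => hx.eq_of_src f 0
  | coprod f _ e ih =>
    intro q
    rw [← cancel_epi e.inv, comp_zero]
    apply Sigma.hom_ext
    intro i
    rw [ih i (Sigma.ι f i ≫ e.inv ≫ q), comp_zero]
  | ext f g h hT _ _ h1 h2 =>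
    intro q
    obtain ⟨r, hr⟩ := exY2 hT q (h1 _)
    rw [hr, h2 r, comp_zero]
  | retract i r hir _ ih =>
    intro q
    calc q = i ≫ r ≫ q := by rw [← Category.assoc, hir, Category.id_comp]
      _ = 0 := by rw [ih (r ≫ q), comp_zero]

/-- The coproduct of a sequence. -/
noncomputable abbrev sqC (D : ℕ → C) : C := ∐ (fun n : ULift.{v} ℕ => D n.down)

/-- The inclusions into the coproduct of a sequence. -/
noncomputable abbrev sqI (D : ℕ → C) (n : ℕ) : D n ⟶ sqC D :=
  Sigma.ι (fun n : ULift.{v} ℕ => D n.down) (ULift.up n)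

/-- The shift map on the coproduct of a sequence. -/
noncomputable def shiftEnd (D : ℕ → C) (d : ∀ k, D k ⟶ D (k + 1)) :
    sqC D ⟶ sqC D :=
  Sigma.desc (fun n => d n.down ≫ sqI D (n.down + 1))

/-- The powers of the shift map. -/
noncomputable def shiftPow (D : ℕ → C) (d : ∀ k, D k ⟶ D (k + 1)) :
    ℕ → (sqC D ⟶ sqC D)
  | 0 => 𝟙 _
  | k + 1 => shiftPow D d k ≫ shiftEnd D d

lemma inj_shiftEnd (D : ℕ → C) (d : ∀ k, D k ⟶ D (k + 1)) (n : ℕ) :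
    sqI D n ≫ shiftEnd D d = d n ≫ sqI D (n + 1) := by
  exact Sigma.ι_desc (fun n : ULift.{v} ℕ => d n.down ≫ sqI D (n.down + 1)) (ULift.up n)

lemma inj_shiftPow (D : ℕ → C) (d : ∀ k, D k ⟶ D (k + 1)) (n k : ℕ) :
    ∃ c : D n ⟶ D (n + k), sqI D n ≫ shiftPow D d k = c ≫ sqI D (n + k) := by
  induction k with
  | zero => exact ⟨𝟙 _, by simp [shiftPow]⟩
  | succ k ih =>
    obtain ⟨c, hc⟩ := ih
    refine ⟨c ≫ d (n + k), ?_⟩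
    rw [shiftPow, ← Category.assoc, hc, Category.assoc, inj_shiftEnd, Category.assoc]
    rfl

lemma shift_nilp {D : ℕ → C} (d : ∀ k, D k ⟶ D (k + 1)) {K : C} (hK : IsCompactObj C K)
    (k₀ : ℕ) (hv : ∀ k, k₀ ≤ k → ∀ f : K ⟶ D k, f = 0) (g : K ⟶ sqC D) :
    g ≫ shiftPow D d k₀ = 0 := by
  obtain ⟨s, hs⟩ := compact_sum hK _ g
  rw [hs, Preadditive.sum_comp]
  apply Finset.sum_eq_zero
  intro i _
  obtain ⟨c, hc⟩ := inj_shiftPow D d i.down k₀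
  have h0 := hv (i.down + k₀) (by omega) ((g ≫ projTo _ i) ≫ c)
  have hc' : Sigma.ι (fun n : ULift.{v} ℕ => D n.down) i ≫ shiftPow D d k₀ =
    c ≫ sqI D (i.down + k₀) := hc
  rw [Category.assoc, hc', ← Category.assoc]
  exact (congrArg (fun t => t ≫ sqI D (i.down + k₀)) h0).trans zero_comp

lemma fixed_zero (hcg : CompactlyGenerated C) {D : ℕ → C} (d : ∀ k, D k ⟶ D (k + 1))
    (hv : ∀ K : C, IsCompactObj C K → ∃ k₀ : ℕ, ∀ k, k₀ ≤ k → ∀ f : K ⟶ D k, f = 0)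
    {Y : C} (φ : ∀ k, D k ⟶ Y) (hφ : ∀ k, φ k = d k ≫ φ (k + 1)) (k : ℕ) : φ k = 0 := by
  obtain ⟨H, π, δ, hT⟩ := distinguished_cocone_triangle (𝟙 _ - shiftEnd D d)
  have fix : ∀ {K : C} (z : K ⟶ sqC D), z = z ≫ shiftEnd D d →
      ∀ k, z = z ≫ shiftPow D d k := by
    intro K z hz k
    induction k with
    | zero => simp [shiftPow]
    | succ k ih => rw [shiftPow, ← Category.assoc, ← ih, ← hz]
  have tel : ∀ {K : C} (z : K ⟶ sqC D) (k : ℕ),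
      ∃ t : K ⟶ sqC D, z = z ≫ shiftPow D d k + t ≫ (𝟙 _ - shiftEnd D d) := by
    intro K z k
    induction k with
    | zero => exact ⟨0, by simp [shiftPow]⟩
    | succ k ih =>
      obtain ⟨t, ht⟩ := ih
      refine ⟨t + z ≫ shiftPow D d k, ?_⟩
      rw [Preadditive.add_comp, shiftPow]
      nth_rw 1 [ht]
      simp only [Preadditive.comp_sub, Category.comp_id, Category.assoc]
      abel
  have hH : IsZero H := by
    apply hcg
    intro K hK q
    have hq : q ≫ δ = 0 := by
      have h0 : δ ≫ (𝟙 _ - shiftEnd D d)⟦(1 : ℤ)⟧' = 0 := comp_distTriang_mor_zero₃₁ _ hT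
      let e : K⟦(-1 : ℤ)⟧⟦(1 : ℤ)⟧ ≅ K := shiftNegShift K (1 : ℤ)
      obtain ⟨z, hz⟩ := (shiftFunctor C (1 : ℤ)).map_surjective (e.hom ≫ q ≫ δ)
      have h1 : z = z ≫ shiftEnd D d := by
        rw [← sub_eq_zero]
        have : z ≫ (𝟙 _ - shiftEnd D d) = 0 := by
          apply (shiftFunctor C (1 : ℤ)).map_injective
          rw [Functor.map_comp, hz, Category.assoc, Category.assoc, h0]
          simp
        simpa [Preadditive.comp_sub] using this
      obtain ⟨k₀, hk₀⟩ := hv _ (compact_shift hK)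
      have h2 : z = 0 := by
        rw [fix z h1 k₀]
        exact shift_nilp d (compact_shift hK) k₀ hk₀ z
      rw [h2, Functor.map_zero] at hz
      rw [← cancel_epi e.hom, ← hz, comp_zero]
    obtain ⟨r, hr⟩ := exC3 hT q hq
    obtain ⟨k₀, hk₀⟩ := hv _ hK
    obtain ⟨t, ht⟩ := tel r k₀
    rw [shift_nilp d hK k₀ hk₀ r, zero_add] at ht
    have h12 : (𝟙 _ - shiftEnd D d) ≫ π = 0 := comp_distTriang_mor_zero₁₂ _ hT
    rw [hr, ht, Category.assoc, h12, comp_zero]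
  let Φ : sqC D ⟶ Y := Sigma.desc (fun n => φ n.down)
  have hι : ∀ n, sqI D n ≫ Φ = φ n := by
    intro n
    exact Sigma.ι_desc (fun n : ULift.{v} ℕ => φ n.down) (ULift.up n)
  obtain ⟨ψ, hψ⟩ := exY2 hT Φ (by
    rw [Preadditive.sub_comp, Category.id_comp, sub_eq_zero]
    apply Sigma.hom_ext
    intro n
    change sqI D n.down ≫ Φ = sqI D n.down ≫ shiftEnd D d ≫ Φ
    rw [← Category.assoc, inj_shiftEnd, Category.assoc, hι, hι, hφ])
  rw [← hι k, hψ, hH.eq_of_src ψ 0]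
  simp

/-- Iterated approximations. -/
lemma exists_tower {G Rm : ℤ → Set C} {A : ℤ} (S : Set C)
    (happ : ∀ i : ℤ, ∀ F ∈ Rm i ∩ S,
      approxTriangle C F (gBarInt C G (-A - i) (A - i)) (Rm (i + 1) ∩ S))
    (i : ℤ) (F : C) (hF : F ∈ Rm i ∩ S) :
    ∃ (D E : ℕ → C) (e : ∀ k, E k ⟶ D k) (d : ∀ k, D k ⟶ D (k + 1))
      (δ : ∀ k, D (k + 1) ⟶ (E k)⟦(1 : ℤ)⟧), D 0 = F ∧
      (∀ k, Triangle.mk (e k) (d k) (δ k) ∈ distTriang C) ∧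
      (∀ k, bigClosure C (unionIic C G (A - i)) (E k)) ∧
      (∀ k : ℕ, D k ∈ Rm (i + k)) := by
  have step : ∀ (k : ℕ) (X : {X : C // X ∈ Rm (i + k) ∩ S}),
      ∃ (Y : {Y : C // Y ∈ Rm (i + (k + 1 : ℕ)) ∩ S}) (E : C) (e : E ⟶ X.1) (d : X.1 ⟶ Y.1)
        (δ : Y.1 ⟶ E⟦(1 : ℤ)⟧), Triangle.mk e d δ ∈ distTriang C ∧
        bigClosure C (unionIic C G (A - i)) E := by
    rintro k ⟨X, hX⟩
    obtain ⟨E, Y, e, d, δ, hT, hE, hY⟩ := happ _ X hX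
    refine ⟨⟨Y, ?_⟩, E, e, d, δ, hT, bigClosure_mono ?_ hE⟩
    · have : i + ((k + 1 : ℕ) : ℤ) = i + k + 1 := by push_cast; ring
      rw [this]; exact hY
    · intro Z hZ
      simp only [unionIcc, unionIic, Set.mem_iUnion, Set.mem_Icc, Set.mem_Iic] at hZ ⊢
      obtain ⟨m, hm, hZ⟩ := hZ
      exact ⟨m, by omega, hZ⟩
  choose nxt E e d δ hT hE using step
  let D : ∀ k : ℕ, {X : C // X ∈ Rm (i + k) ∩ S} := fun k =>
    Nat.rec (motive := fun k : ℕ => {X : C // X ∈ Rm (i + k) ∩ S})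
      ⟨F, by simpa using hF⟩ (fun k X => nxt k X) k
  exact ⟨fun k => (D k).1, fun k => E k (D k), fun k => e k (D k), fun k => d k (D k),
    fun k => δ k (D k), rfl, fun k => hT k (D k), fun k => hE k (D k), fun k => (D k).2.1⟩

lemma mem_MG_of_mem {G : ℤ → Set C} {n m : ℤ} (hm : m ≤ -n) : G m ⊆ MG C G n := by
  intro X hX
  refine ⟨X, .of ?_, 𝟙 X, 𝟙 X, by simp⟩
  simp only [unionIic, Set.mem_iUnion, Set.mem_Iic]
  exact ⟨m, hm, hX⟩

lemma tower_vanish {G Rm : ℤ → Set C} {A : ℤ} (hG : IsGenSeq C G)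
    (h : IsGPreApprox C G Rm A) {i : ℤ} {D : ℕ → C} (hD : ∀ k : ℕ, D k ∈ Rm (i + k))
    (K : C) (hK : IsCompactObj C K) : ∃ k₀ : ℕ, ∀ k, k₀ ≤ k → ∀ f : K ⟶ D k, f = 0 := by
  obtain ⟨N, hN⟩ := vanish_of_compact hG h hK
  exact ⟨(N - i).toNat, fun k hk f => hN _ (by omega) _ (hD k) f⟩

lemma subset_RG {G Rm : ℤ → Set C} {A : ℤ} (S : Set C) (hcg : CompactlyGenerated C)
    (hG : IsGenSeq C G) (h : IsGPreApprox C G Rm A)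
    (happ : ∀ i : ℤ, ∀ F ∈ Rm i ∩ S,
      approxTriangle C F (gBarInt C G (-A - i) (A - i)) (Rm (i + 1) ∩ S)) (i : ℤ) :
    Rm (i + A) ∩ S ⊆ RG C G i := by
  intro F hF Y hY f
  obtain ⟨D, E, e, d, δ, rfl, hT, hE, hD⟩ := exists_tower S happ _ F hF
  have hEY : ∀ k (q : E k ⟶ Y), q = 0 := by
    intro k
    refine bigClosure_zero ?_ (hE k)
    intro X hX
    simp only [unionIic, Set.mem_iUnion, Set.mem_Iic] at hX
    obtain ⟨m, hm, hX⟩ := hX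
    exact hY X (mem_MG_of_mem (by omega) hX)
  have step : ∀ k (q : D k ⟶ Y), ∃ r : D (k + 1) ⟶ Y, q = d k ≫ r := fun k q =>
    exY2 (hT k) q (hEY k _)
  choose nxt hn using step
  let φ : ∀ k, D k ⟶ Y := fun k =>
    Nat.rec (motive := fun k : ℕ => (D k ⟶ Y)) f (fun k q => nxt k q) k
  exact fixed_zero hcg d (tower_vanish hG h hD) φ (fun k => hn k (φ k)) 0

lemma RG_subset {G Rm : ℤ → Set C} {A : ℤ} (h : IsGPreApprox C G Rm A) (i : ℤ) :
    RG C G (i + A) ⊆ Rm i := by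
  intro X hX
  rw [← h.orthMetric.orth i]
  intro Y hY
  exact hX Y (fun a ha => hY a (h.cond1 i ha).1)

lemma compacts_subset_clos {Rm : ℤ → Set C} (h : IsOrthMetric C Rm) :
    compacts C ⊆ closCompacts C Rm := by
  intro X hX
  refine Set.mem_iInter.2 (fun n => ⟨X, _, 𝟙 X, 0, 0, contractible_distinguished X, hX,
    h.zero_mem n _ (isZero_zero C)⟩)

lemma compact_subset_MG {G Rm : ℤ → Set C} {A : ℤ} (hG : IsGenSeq C G)
    (h : IsWeakGQuasiApprox C G Rm A) (i : ℤ) : Rm (i + A) ∩ compacts C ⊆ MG C G i := by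
  intro F hF
  obtain ⟨D, E, e, d, δ, rfl, hT, hE, hD⟩ := exists_tower _ h.approx _ F
    ⟨hF.1, compacts_subset_clos h.orthMetric hF.2⟩
  have hU : ∀ E, extClosure C (unionIic C G (A - (i + A))) E → IsCompactObj C E := by
    intro E hE
    have : E ∈ compacts C := by
      rw [← hG.generates]
      refine ⟨E, extClosure_mono ?_ hE, 𝟙 E, 𝟙 E, by simp⟩
      intro Z hZ
      simp only [unionIic, unionAll, Set.mem_iUnion] at hZ ⊢
      obtain ⟨m, _, hZ⟩ := hZ
      exact ⟨m, hZ⟩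
    exact this
  let c : ∀ k, D 0 ⟶ D k := fun k =>
    Nat.rec (motive := fun k : ℕ => (D 0 ⟶ D k)) (𝟙 _) (fun k q => q ≫ d k) k
  obtain ⟨k₀, hk₀⟩ := tower_vanish hG h.toIsGPreApprox hD (D 0) hF.2
  obtain ⟨X, hX, a, b, hab⟩ := fac_of_tower hU D E e d δ hT hE c rfl (fun _ => rfl) k₀ (D 0)
    hF.2 (𝟙 _) (hk₀ k₀ le_rfl _)
  refine ⟨X, ?_, a, b, hab.symm⟩
  have : A - (i + A) = -i := by ring
  rw [this] at hX
  exact hX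

end Aux

theorem statement_10 (G Rm : ℤ → Set C) (A : ℤ)
    (hcg : CompactlyGenerated C) (hG : IsGenSeq C G)
    (h : IsWeakGQuasiApprox C G Rm A) :
    MetricNEquiv C (MG C G) (fun n => Rm n ∩ compacts C) ∧
    MetricNEquiv C (fun n => Rm n ∩ closCompacts C Rm)
      (fun n => RG C G n ∩ closCompacts C Rm) ∧
    (IsWeakGApprox C G Rm A → MetricNEquiv C Rm (RG C G)) := by
  have hA := h.A_pos.le
  refine ⟨⟨A, hA, h.cond1, compact_subset_MG hG h⟩, ⟨A, hA, ?_, ?_⟩, fun hw => ⟨A, hA, ?_, ?_⟩⟩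
  · intro i X hX
    exact ⟨subset_RG _ hcg hG h.toIsGPreApprox h.approx i hX, hX.2⟩
  · intro i X hX
    exact ⟨RG_subset h.toIsGPreApprox i hX.1, hX.2⟩
  · intro i X hX
    refine subset_RG Set.univ hcg hG h.toIsGPreApprox ?_ i ⟨hX, trivial⟩
    intro j F hF
    simpa using hw.approx j F hF.1
  · exact RG_subset h.toIsGPreApprox

end GApprox
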